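/- Let E be a real Hilbert space, G ⊆ E a closed subspace with orthogonal complement G^⊥, and let Ψ₀, Ψ₁: E → ℝ be Fréchet C^1 functionals such that there is ω > 0 with ⟨Ψᵢ′(u) − Ψᵢ′(v), u − v⟩ ≥ (ω/2)‖u − v‖² whenever u − v ∈ G^⊥, for i = 0, 1. Suppose h₀, h₁: G → G^⊥ satisfy ⟨Ψᵢ′(g + hᵢ(g)), h⟩ = 0 for all g ∈ G and h ∈ G^⊥ (i = 0, 1). Then for every g ∈ G: ‖h₁(g) − h₀(g)‖ ≤ (2/ω)·‖Ψ₁′(g + h₀(g)) − Ψ₀′(g + h₀(g))‖. -/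

import Mathlib

/-- Key estimate in Lemma 2.10 (v): the reduction maps of two functionals
that are uniformly convex in the `G^⊥`-directions with the same constant `ω`
differ by at most `(2/ω)` times the distance between the derivatives. -/
theorem reduction_map_continuity_estimate
    (E : Type*) [NormedAddCommGroup E] [InnerProductSpace ℝ E]
    (G : Submodule ℝ E)
    (Ψ₀ Ψ₁ : E → ℝ) (hΨ₀ : ContDiff ℝ 1 Ψ₀) (hΨ₁ : ContDiff ℝ 1 Ψ₁)
    (ω : ℝ) (hω : 0 < ω)
    (hconv₀ : ∀ u v : E, u - v ∈ Gᗮ →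
      (ω / 2) * ‖u - v‖ ^ 2 ≤ fderiv ℝ Ψ₀ u (u - v) - fderiv ℝ Ψ₀ v (u - v))
    (hconv₁ : ∀ u v : E, u - v ∈ Gᗮ →
      (ω / 2) * ‖u - v‖ ^ 2 ≤ fderiv ℝ Ψ₁ u (u - v) - fderiv ℝ Ψ₁ v (u - v))
    (h₀ h₁ : E → E)
    (hmem₀ : ∀ g ∈ G, h₀ g ∈ Gᗮ) (hmem₁ : ∀ g ∈ G, h₁ g ∈ Gᗮ)
    (hcrit₀ : ∀ g ∈ G, ∀ h ∈ Gᗮ, fderiv ℝ Ψ₀ (g + h₀ g) h = 0)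
    (hcrit₁ : ∀ g ∈ G, ∀ h ∈ Gᗮ, fderiv ℝ Ψ₁ (g + h₁ g) h = 0) :
    ∀ g ∈ G, ‖h₁ g - h₀ g‖ ≤
      (2 / ω) * ‖fderiv ℝ Ψ₁ (g + h₀ g) - fderiv ℝ Ψ₀ (g + h₀ g)‖ := by
  intro g hg
  have hd : h₁ g - h₀ g ∈ Gᗮ := Submodule.sub_mem _ (hmem₁ g hg) (hmem₀ g hg)
  have he : (g + h₁ g) - (g + h₀ g) = h₁ g - h₀ g := by abel
  have hc := hconv₁ (g + h₁ g) (g + h₀ g) (by rw [he]; exact hd)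
  rw [he, hcrit₁ g hg _ hd] at hc
  have h0 := hcrit₀ g hg _ hd
  have hop := (fderiv ℝ Ψ₁ (g + h₀ g) - fderiv ℝ Ψ₀ (g + h₀ g)).le_opNorm (h₁ g - h₀ g)
  rw [ContinuousLinearMap.sub_apply, h0, Real.norm_eq_abs] at hop
  have hab := neg_abs_le (fderiv ℝ Ψ₁ (g + h₀ g) (h₁ g - h₀ g) - 0)
  have hN := norm_nonneg (fderiv ℝ Ψ₁ (g + h₀ g) - fderiv ℝ Ψ₀ (g + h₀ g))
  generalize ‖fderiv ℝ Ψ₁ (g + h₀ g) - fderiv ℝ Ψ₀ (g + h₀ g)‖ = N at *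
  have hkey : (ω / 2) * ‖h₁ g - h₀ g‖ ^ 2 ≤ N * ‖h₁ g - h₀ g‖ := by linarith
  rcases (norm_nonneg (h₁ g - h₀ g)).eq_or_lt with hz | hpos
  · rw [← hz]; positivity
  · have : (ω / 2) * ‖h₁ g - h₀ g‖ ≤ N := by
      refine le_of_mul_le_mul_right ?_ hpos
      rw [mul_assoc, ← sq]; exact hkey
    rw [div_mul_eq_mul_div, le_div_iff₀ hω]
    linarith
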